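/- arXiv:2312.13488 — 3 statements merged into one kernel-verified Lean document; each statement's English description precedes it below -/
import Mathlib

section
/- Let n ≥ k and let V be a real inner product space of finite dimension k. The inclusion of the subspace P = {A : EuclideanSpace ℝ (Fin n) →L V | A ∘ A† = id_V} into the subspace F = {A : EuclideanSpace ℝ (Fin n) →L V | A is surjective} (both with the topology induced from the operator-norm topology on continuous linear maps) is a homotopy equivalence of topological spaces. -/
/-!
In an orthonormal basis `b` of `V`, a map `A : E → V` is determined by its rows `A† bᵢ`, and this
identifies the operators with the families in `E` homeomorphically. Surjective operators correspond
to linearly independent families, Parseval ones to orthonormal families, so the theorem is about the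
inclusion of orthonormal into linearly independent families.

Normalized Gram-Schmidt is a continuous retraction for this inclusion. It is homotopic to the
identity along straight segments: if `e` is the orthonormalization of `f`, then
`⟪eⱼ, (1 - t) eᵢ + t fᵢ⟫` vanishes for `i < j` and is positive for `i = j`, so the family stays
linearly independent for all `t ∈ [0, 1]`.
-/

open Finset InnerProductSpace ContinuousLinearMap
open scoped ContinuousMap InnerProduct

section LinearIndependent

variable {ι R M N : Type*} [Ring R] [AddCommGroup M] [Module R M] [AddCommGroup N] [Module R N]

lemma linearIndependent_of_dual_triangular [LinearOrder ι] [NoZeroDivisors R] {v : ι → M}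
    (φ : ι → Module.Dual R M) (hdiag : ∀ i, φ i (v i) ≠ 0)
    (htri : ∀ ⦃i j⦄, i < j → φ j (v i) = 0) : LinearIndependent R v := by
  refine linearIndependent_iff.2 fun c hc => by_contra fun hne => ?_
  obtain ⟨j, hj, hmax⟩ := c.support.exists_maximal (Finsupp.support_nonempty_iff.2 hne)
  have hsum : ∑ i ∈ c.support, c i * φ j (v i) = 0 := by
    simpa [Finsupp.linearCombination_apply, Finsupp.sum] using congrArg (φ j) hc
  have hother (i) (hi : i ∈ c.support) (hij : i ≠ j) : c i * φ j (v i) = 0 := by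
    have hlt : i < j := hij.lt_of_le ((le_total i j).elim id (hmax hi))
    rw [htri hlt, mul_zero]
  rw [sum_eq_single_of_mem j hj hother] at hsum
  exact mul_ne_zero (Finsupp.mem_support_iff.1 hj) (hdiag j) hsum

lemma linearIndependent_comp_basis_iff (b : Module.Basis ι R M) (f : M →ₗ[R] N) :
    LinearIndependent R (f ∘ b) ↔ f.ker = ⊥ := by
  have hb : Finsupp.linearCombination R b = b.repr.symm.toLinearMap :=
    LinearMap.ext fun c => (b.repr_symm_apply c).symm
  rw [LinearIndependent, Finsupp.linearCombination_linear_comp, hb, LinearMap.coe_comp,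
    LinearEquiv.coe_coe, EquivLike.injective_comp, LinearMap.ker_eq_bot]

end LinearIndependent

section GramSchmidt

variable {𝕜 E ι : Type*} [RCLike 𝕜] [NormedAddCommGroup E] [InnerProductSpace 𝕜 E]
  [LinearOrder ι] [LocallyFiniteOrderBot ι] [WellFoundedLT ι]

lemma continuousOn_gramSchmidt (i : ι) :
    ContinuousOn (fun f : ι → E => gramSchmidt 𝕜 f i) {f | LinearIndependent 𝕜 f} := by
  induction i using WellFoundedLT.induction with
  | ind i ih =>
    simp_rw [gramSchmidt_def 𝕜 _ i, Submodule.starProjection_singleton]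
    refine (continuous_apply i).continuousOn.sub (continuousOn_finsetSum _ fun j hj => ?_)
    have hcont := ih j (mem_Iio.1 hj)
    refine .smul (.div (hcont.inner (continuous_apply i).continuousOn)
      (RCLike.continuous_ofReal.comp_continuousOn (hcont.norm.pow 2)) fun f hf => ?_) hcont
    simpa using gramSchmidt_ne_zero j hf

lemma continuousOn_gramSchmidtNormed :
    ContinuousOn (gramSchmidtNormed 𝕜 : (ι → E) → ι → E) {f | LinearIndependent 𝕜 f} := by
  refine continuousOn_pi.2 fun i => ?_
  have hcont := continuousOn_gramSchmidt (𝕜 := 𝕜) (E := E) i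
  refine .smul (.inv₀ (RCLike.continuous_ofReal.comp_continuousOn hcont.norm) fun f hf => ?_) hcont
  simpa using gramSchmidt_ne_zero i hf

lemma gramSchmidtNormed_of_orthonormal {f : ι → E} (hf : Orthonormal 𝕜 f) :
    gramSchmidtNormed 𝕜 f = f := by
  funext i
  simp [gramSchmidtNormed, gramSchmidt_of_orthogonal 𝕜 fun _ _ h => hf.2 h, hf.1 i]

lemma inner_gramSchmidt_self (f : ι → E) (i : ι) :
    ⟪gramSchmidt 𝕜 f i, f i⟫_𝕜 = (‖gramSchmidt 𝕜 f i‖ : 𝕜) ^ 2 := by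
  conv_lhs => rw [gramSchmidt_def'' 𝕜 f i]
  rw [inner_add_right, inner_self_eq_norm_sq_to_K, inner_sum, add_eq_left]
  refine sum_eq_zero fun j hj => ?_
  rw [inner_smul_right, gramSchmidt_orthogonal 𝕜 f (mem_Iio.1 hj).ne', mul_zero]

lemma inner_gramSchmidtNormed_self (f : ι → E) (i : ι) :
    ⟪gramSchmidtNormed 𝕜 f i, f i⟫_𝕜 = ‖gramSchmidt 𝕜 f i‖ := by
  rw [gramSchmidtNormed, inner_smul_left, inner_gramSchmidt_self]
  rcases eq_or_ne (‖gramSchmidt 𝕜 f i‖ : 𝕜) 0 with h | h <;> simp [sq, h]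

lemma gramSchmidtNormed_inv_triangular (f : ι → E) {i j : ι} (hij : i < j) :
    ⟪gramSchmidtNormed 𝕜 f j, f i⟫_𝕜 = 0 := by
  rw [gramSchmidtNormed, inner_smul_left, gramSchmidt_inv_triangular 𝕜 f hij, mul_zero]

lemma linearIndependent_segment_gramSchmidtNormed {f : ι → E} (hf : LinearIndependent 𝕜 f)
    {t : ℝ} (ht : t ∈ unitInterval) :
    LinearIndependent 𝕜 ((1 - (t : 𝕜)) • gramSchmidtNormed 𝕜 f + (t : 𝕜) • f) := by
  have he := gramSchmidtNormed_orthonormal hf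
  refine linearIndependent_of_dual_triangular (fun j => innerₛₗ 𝕜 (gramSchmidtNormed 𝕜 f j))
    (fun i => ?_) fun i j hij => ?_
  · have hpos : 0 < (1 - t) + t * ‖gramSchmidt 𝕜 f i‖ := by
      have hnorm : 0 < ‖gramSchmidt 𝕜 f i‖ := norm_pos_iff.2 (gramSchmidt_ne_zero i hf)
      rcases ht.1.eq_or_lt with rfl | ht0
      · simp
      · exact add_pos_of_nonneg_of_pos (sub_nonneg.2 ht.2) (mul_pos ht0 hnorm)
    simp only [innerₛₗ_apply_apply, Pi.add_apply, Pi.smul_apply, inner_add_right, inner_smul_right,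
      inner_self_eq_norm_sq_to_K, he.1 i, inner_gramSchmidtNormed_self, RCLike.ofReal_one, one_pow,
      mul_one]
    exact_mod_cast hpos.ne'
  · simp [inner_add_right, inner_smul_right, he.2 hij.ne', gramSchmidtNormed_inv_triangular f hij]

end GramSchmidt

section Stiefel

variable (𝕜 E ι : Type*) [RCLike 𝕜] [NormedAddCommGroup E] [InnerProductSpace 𝕜 E]

/-- The inclusion of the Stiefel manifold of orthonormal families into the noncompact Stiefel
manifold of linearly independent families. -/
def stiefelInclusion :
    C({f : ι → E // Orthonormal 𝕜 f}, {f : ι → E // LinearIndependent 𝕜 f}) where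
  toFun f := ⟨f, f.2.linearIndependent⟩

variable [LinearOrder ι] [LocallyFiniteOrderBot ι] [WellFoundedLT ι]

/-- Gram-Schmidt orthonormalization, as a continuous map between Stiefel manifolds. -/
noncomputable def stiefelRetraction :
    C({f : ι → E // LinearIndependent 𝕜 f}, {f : ι → E // Orthonormal 𝕜 f}) where
  toFun f := ⟨gramSchmidtNormed 𝕜 f.1, gramSchmidtNormed_orthonormal f.2⟩
  continuous_toFun := continuousOn_gramSchmidtNormed.domRestrict.subtype_mk _

lemma stiefelRetraction_comp_stiefelInclusion :
    (stiefelRetraction 𝕜 E ι).comp (stiefelInclusion 𝕜 E ι) = .id _ :=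
  ContinuousMap.ext fun f => Subtype.ext (gramSchmidtNormed_of_orthonormal f.2)

/-- The straight-line homotopy from Gram-Schmidt orthonormalization to the identity. The parameter
is cast to `𝕜`, as `E` is only assumed to be a vector space over `𝕜`. -/
noncomputable def stiefelHomotopy :
    ((stiefelInclusion 𝕜 E ι).comp (stiefelRetraction 𝕜 E ι)).Homotopy (.id _) where
  toFun p := ⟨(1 - ((p.1 : ℝ) : 𝕜)) • gramSchmidtNormed 𝕜 p.2.1 + ((p.1 : ℝ) : 𝕜) • p.2.1,
    linearIndependent_segment_gramSchmidtNormed p.2.2 p.1.2⟩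
  continuous_toFun := by
    have hgs : Continuous fun p : unitInterval × {f : ι → E // LinearIndependent 𝕜 f} =>
        gramSchmidtNormed 𝕜 p.2.1 := continuousOn_gramSchmidtNormed.domRestrict.comp continuous_snd
    exact .subtype_mk (by fun_prop) _
  map_zero_left f := Subtype.ext <| show _ = gramSchmidtNormed 𝕜 f.1 by simp
  map_one_left f := Subtype.ext (by simp)

/-- The inclusion of orthonormal families into linearly independent ones, as a homotopy
equivalence. -/
noncomputable def stiefelHomotopyEquiv :
    {f : ι → E // Orthonormal 𝕜 f} ≃ₕ {f : ι → E // LinearIndependent 𝕜 f} where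
  toFun := stiefelInclusion 𝕜 E ι
  invFun := stiefelRetraction 𝕜 E ι
  left_inv := stiefelRetraction_comp_stiefelInclusion 𝕜 E ι ▸ .refl _
  right_inv := ⟨stiefelHomotopy 𝕜 E ι⟩

end Stiefel

section Rows

variable {𝕜 E V ι : Type*} [RCLike 𝕜] [NormedAddCommGroup E] [InnerProductSpace 𝕜 E]
  [CompleteSpace E] [NormedAddCommGroup V] [InnerProductSpace 𝕜 V] [CompleteSpace V] [Fintype ι]

/-- An operator `A : E → V` as the family of its rows `A† bᵢ` in an orthonormal basis `b` of `V`. -/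
noncomputable def rowsHomeomorph (b : OrthonormalBasis ι 𝕜 V) : (E →L[𝕜] V) ≃ₜ (ι → E) :=
  open Classical in
  adjoint.toHomeomorph.trans
    ((b.toBasis.equivFunL.arrowCongr (.refl 𝕜 E)).trans (.piRing ι)).toHomeomorph

lemma rowsHomeomorph_apply (b : OrthonormalBasis ι 𝕜 V) (A : E →L[𝕜] V) :
    rowsHomeomorph b A = adjoint A ∘ b := by
  classical
  funext i
  have hb : b.toBasis.equivFunL.symm (Pi.single i 1) = b i := by
    rw [ContinuousLinearEquiv.symm_apply_eq]
    ext j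
    simp [Pi.single_apply, eq_comm]
  exact congrArg (adjoint A) hb

lemma surjective_iff_ker_adjoint_eq_bot [FiniteDimensional 𝕜 V] (A : E →L[𝕜] V) :
    Function.Surjective A ↔ (adjoint A).ker = ⊥ := by
  rw [← orthogonal_range, Submodule.orthogonal_eq_bot_iff, LinearMap.range_eq_top, coe_coe]

lemma surjective_iff_linearIndependent_rows (b : OrthonormalBasis ι 𝕜 V) (A : E →L[𝕜] V) :
    Function.Surjective A ↔ LinearIndependent 𝕜 (rowsHomeomorph b A) := by
  have := b.toBasis.finiteDimensional_of_finite
  rw [surjective_iff_ker_adjoint_eq_bot, ← linearIndependent_comp_basis_iff b.toBasis,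
    rowsHomeomorph_apply, b.coe_toBasis, coe_coe]

lemma comp_adjoint_eq_id_iff_orthonormal_rows (b : OrthonormalBasis ι 𝕜 V) (A : E →L[𝕜] V) :
    A ∘L adjoint A = .id 𝕜 V ↔ Orthonormal 𝕜 (rowsHomeomorph b A) := by
  have hA := inner_map_map_iff_adjoint_comp_self (adjoint A)
  rw [adjoint_adjoint, one_def] at hA
  rw [rowsHomeomorph_apply, ← hA]
  constructor
  · intro hinner
    exact b.orthonormal.comp_linearIsometry ((adjoint A).toLinearMap.isometryOfInner hinner)
  · intro hrows
    exact ((adjoint A).toLinearMap.isometryOfOrthonormal (v := b.toBasis)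
      (by simp) (by simpa)).inner_map_map

end Rows

theorem parseval_inclusion_homotopy_equiv_general {𝕜 E V : Type*} [RCLike 𝕜]
    [NormedAddCommGroup E] [InnerProductSpace 𝕜 E] [CompleteSpace E]
    [NormedAddCommGroup V] [InnerProductSpace 𝕜 V] [CompleteSpace V] [FiniteDimensional 𝕜 V] :
    ∃ h : {A : E →L[𝕜] V // A ∘L adjoint A = .id 𝕜 V} ≃ₕ
        {A : E →L[𝕜] V // Function.Surjective A}, ∀ A, (h A).1 = A.1 := by
  let b := stdOrthonormalBasis 𝕜 V
  let parsevalRows : {A : E →L[𝕜] V // A ∘L adjoint A = .id 𝕜 V} ≃ₜ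
      {f : _ → E // Orthonormal 𝕜 f} :=
    (rowsHomeomorph b).subtype (comp_adjoint_eq_id_iff_orthonormal_rows b)
  let frameRows : {A : E →L[𝕜] V // Function.Surjective A} ≃ₜ
      {f : _ → E // LinearIndependent 𝕜 f} :=
    (rowsHomeomorph b).subtype (surjective_iff_linearIndependent_rows b)
  exact ⟨(parsevalRows.toHomotopyEquiv.trans (stiefelHomotopyEquiv 𝕜 E _)).trans
    frameRows.symm.toHomotopyEquiv, fun A => (rowsHomeomorph b).symm_apply_apply A.1⟩

/-- The inclusion of the space of `n`-Parseval frames `{A | A ∘ A† = id}` into the space of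
`n`-frames `{A | A surjective}` (with the operator-norm subspace topologies) is a homotopy
equivalence. -/
theorem parseval_inclusion_homotopy_equiv {n k : ℕ} (hnk : k ≤ n) {V : Type*}
    [NormedAddCommGroup V] [InnerProductSpace ℝ V] [FiniteDimensional ℝ V]
    (hV : Module.finrank ℝ V = k) :
    ∃ h : ContinuousMap.HomotopyEquiv
        {A : EuclideanSpace ℝ (Fin n) →L[ℝ] V //
          A ∘L ContinuousLinearMap.adjoint A = ContinuousLinearMap.id ℝ V}
        {A : EuclideanSpace ℝ (Fin n) →L[ℝ] V // Function.Surjective A},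
      ∀ A, ((h.toFun A : {A : EuclideanSpace ℝ (Fin n) →L[ℝ] V // Function.Surjective A}) :
          EuclideanSpace ℝ (Fin n) →L[ℝ] V) = A.1 :=
  parseval_inclusion_homotopy_equiv_general
end

section
/- Let n ≥ k and let V be a real inner product space of finite dimension k. For any two continuous linear maps A, B : EuclideanSpace ℝ (Fin n) → V satisfying A ∘ A† = id_V and B ∘ B† = id_V, there exist a linear isometric equivalence M : V ≃ V and a linear isometric equivalence N : EuclideanSpace ℝ (Fin n) ≃ EuclideanSpace ℝ (Fin n) such that B = M ∘ A ∘ N⁻¹. In other words, the group O(V) × O(n) acts transitively on the space of n-Parseval frames in V. -/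
/-!
A frame is determined up to an isometry of its domain by its frame operator `A A†`, so `M = id`
suffices. Indeed `‖A† v‖² = ⟪A A† v, v⟫`, so if `A A† = B B†` then `A† v ↦ B† v` is a well-defined
linear isometry from the range of `A†` to that of `B†`. In finite dimension it extends to an
isometry `N` of the whole space, and taking adjoints in `N A† = B†` gives `A N⁻¹ = B`.
-/

section FrameOperator

open ContinuousLinearMap

variable {𝕜 E V : Type*} [RCLike 𝕜]
  [NormedAddCommGroup E] [InnerProductSpace 𝕜 E]
  [NormedAddCommGroup V] [InnerProductSpace 𝕜 V]

theorem exists_linearIsometryEquiv_apply_eq_of_norm_eq [FiniteDimensional 𝕜 E]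
    {X : Type*} [AddCommGroup X] [Module 𝕜 X] (S T : X →ₗ[𝕜] E) (h : ∀ x, ‖S x‖ = ‖T x‖) :
    ∃ N : E ≃ₗᵢ[𝕜] E, ∀ x, N (S x) = T x := by
  have T_eq_of_S_eq {x y : X} (hxy : S x = S y) : T x = T y := by
    rw [← sub_eq_zero, ← map_sub, ← norm_eq_zero, ← h, map_sub, hxy, sub_self, norm_zero]
  obtain ⟨R, hR⟩ := S.rangeRestrict.exists_rightInverse_of_surjective S.range_rangeRestrict
  have S_R (y : S.range) : S (R y) = y := congr_arg Subtype.val (LinearMap.congr_fun hR y)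
  let L : S.range →ₗᵢ[𝕜] E :=
    { toLinearMap := T ∘ₗ R
      norm_map' := fun y => by rw [LinearMap.comp_apply, ← h, S_R, Submodule.coe_norm] }
  refine ⟨L.extend.toLinearIsometryEquiv rfl, fun x => ?_⟩
  calc
    L.extend (S x) = T (R (S.rangeRestrict x)) := L.extend_apply (S.rangeRestrict x)
    _ = T x := T_eq_of_S_eq (S_R _)

theorem norm_adjoint_apply_eq_of_comp_adjoint_eq {F : Type*}
    [NormedAddCommGroup F] [InnerProductSpace 𝕜 F]
    [CompleteSpace E] [CompleteSpace F] [CompleteSpace V] {A : E →L[𝕜] V} {B : F →L[𝕜] V}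
    (hAB : A ∘L adjoint A = B ∘L adjoint B) (v : V) :
    ‖adjoint A v‖ = ‖adjoint B v‖ := by
  rw [apply_norm_eq_sqrt_inner_adjoint_left, apply_norm_eq_sqrt_inner_adjoint_left,
    adjoint_adjoint, adjoint_adjoint, hAB]

theorem orthogonal_transitive_on_parseval_general
    [FiniteDimensional 𝕜 E] [CompleteSpace E] [CompleteSpace V] (A B : E →L[𝕜] V)
    (hAB : A ∘L adjoint A = B ∘L adjoint B) :
    ∃ N : E ≃ₗᵢ[𝕜] E, ∀ x : E, B x = A (N.symm x) := by
  obtain ⟨N, hN⟩ := exists_linearIsometryEquiv_apply_eq_of_norm_eq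
    (adjoint A).toLinearMap (adjoint B).toLinearMap (norm_adjoint_apply_eq_of_comp_adjoint_eq hAB)
  have adjoint_B : adjoint B = (N : E →L[𝕜] E) ∘L adjoint A := ext fun v => (hN v).symm
  have B_eq : B = A ∘L (N.symm : E →L[𝕜] E) :=
    calc
      B = adjoint ((N : E →L[𝕜] E) ∘L adjoint A) := by rw [← adjoint_B, adjoint_adjoint]
      _ = A ∘L (N.symm : E →L[𝕜] E) := by
        rw [adjoint_comp, adjoint_adjoint, N.adjoint_eq_symm]
  exact ⟨N, DFunLike.congr_fun B_eq⟩

end FrameOperator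

/-- The group `O(V) × O(n)` acts transitively on the space of `n`-Parseval frames in `V`:
any two Parseval frames `A, B` are related by `B = M ∘ A ∘ N⁻¹` for linear isometric
equivalences `M` of `V` and `N` of `EuclideanSpace ℝ (Fin n)`. -/
theorem orthogonal_transitive_on_parseval {n k : ℕ} (hnk : k ≤ n) {V : Type*}
    [NormedAddCommGroup V] [InnerProductSpace ℝ V] [FiniteDimensional ℝ V]
    (hV : Module.finrank ℝ V = k) (A B : EuclideanSpace ℝ (Fin n) →L[ℝ] V)
    (hA : A ∘L ContinuousLinearMap.adjoint A = ContinuousLinearMap.id ℝ V)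
    (hB : B ∘L ContinuousLinearMap.adjoint B = ContinuousLinearMap.id ℝ V) :
    ∃ (M : V ≃ₗᵢ[ℝ] V)
      (N : EuclideanSpace ℝ (Fin n) ≃ₗᵢ[ℝ] EuclideanSpace ℝ (Fin n)),
      ∀ x : EuclideanSpace ℝ (Fin n), B x = M (A (N.symm x)) := by
  obtain ⟨N, hN⟩ := orthogonal_transitive_on_parseval_general A B (hA.trans hB.symm)
  exact ⟨.refl ℝ V, N, hN⟩
end

section
/- Let n ≥ k ≥ 1 and let V be a real inner product space of finite dimension k. The set of continuous linear maps A : EuclideanSpace ℝ (Fin n) → V such that A is surjective and every eigenspace of the frame operator A ∘ A† has dimension at most 1 (i.e., the k eigenvalues of A ∘ A† are pairwise distinct) is an open and dense subset of the space of all continuous linear maps from EuclideanSpace ℝ (Fin n) to V with the operator-norm topology. -/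
/-!
Openness: the dimension of a kernel is upper semicontinuous, so surjectivity is an open condition,
and so is `dim ker (T - μ) ≤ 1` jointly in `(T, μ)`. Only the compactly many `μ` with
`‖μ‖ ≤ ‖T‖` matter, so the bound for all `μ` at once is open in `T`.

Density: if `B` is surjective with linear section `R`, then `(A - t B) R = A R - t` is invertible
for all but finitely many `t`, so surjective maps are dense. If `A` is surjective, then
`T = A A†` is positive definite, with eigenvalues `λ₁ ≥ ⋯ ≥ λₖ > 0` for an orthonormal basis
`e₁, …, eₖ`. Choose `D` self-adjoint with `D eᵢ = cᵢ eᵢ` and `c₁ > ⋯ > cₖ ≥ 0`. The frame operator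
of `(1 + t D) A` is `(1 + t D) T (1 + t D)`, whose eigenvalues `(1 + t cᵢ)² λᵢ` are pairwise
distinct for every `t > 0`.
-/

open Filter Module Module.End Topology
open ContinuousLinearMap (adjoint)
open scoped InnerProductSpace

section FiniteDimensional

variable {𝕜 E F : Type*} [NontriviallyNormedField 𝕜]
  [NormedAddCommGroup E] [NormedSpace 𝕜 E] [NormedAddCommGroup F] [NormedSpace 𝕜 F]

theorem eigenspace_eq_bot_of_opNorm_lt {T : E →L[𝕜] E} {μ : 𝕜} (h : ‖T‖ < ‖μ‖) :
    eigenspace (T : E →ₗ[𝕜] E) μ = ⊥ := by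
  refine (Submodule.eq_bot_iff _).mpr fun v hv => ?_
  have hTv : T v = μ • v := mem_eigenspace_iff.mp hv
  by_contra hv0
  have hle : ‖μ‖ * ‖v‖ ≤ ‖T‖ * ‖v‖ := by
    rw [← norm_smul, ← hTv]
    exact T.le_opNorm v
  exact h.not_ge (le_of_mul_le_mul_right hle (norm_pos_iff.mpr hv0))

theorem dense_setOf_surjective [FiniteDimensional 𝕜 F] {B : E →L[𝕜] F}
    (hB : Function.Surjective B) : Dense {A : E →L[𝕜] F | Function.Surjective A} := by
  intro A
  obtain ⟨R, hR⟩ :=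
    (B : E →ₗ[𝕜] F).exists_rightInverse_of_surjective (LinearMap.range_eq_top.mpr hB)
  have hBR (v : F) : B (R v) = v := LinearMap.congr_fun hR v
  have tendsto_perturbation : Tendsto (fun t : 𝕜 => A - t • B) (𝓝[≠] 0) (𝓝 A) := by
    have hcont : Continuous fun t : 𝕜 => A - t • B := by fun_prop
    simpa using (hcont.tendsto 0).mono_left nhdsWithin_le_nhds
  have eventually_not_eigenvalue :
      ∀ᶠ t in 𝓝[≠] (0 : 𝕜), ¬ HasEigenvalue ((A : E →ₗ[𝕜] F) ∘ₗ R) t :=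
    (finite_hasEigenvalue _).eventually_cofinite_notMem.filter_mono (nhdsNE_le_cofinite 0)
  refine mem_closure_of_tendsto tendsto_perturbation ?_
  filter_upwards [eventually_not_eigenvalue] with t ht
  have hinj : Function.Injective (((A - t • B : E →L[𝕜] F) : E →ₗ[𝕜] F) ∘ₗ R) := by
    refine (injective_iff_map_eq_zero _).mpr fun v hv => ?_
    have hv' : v ∈ eigenspace ((A : E →ₗ[𝕜] F) ∘ₗ R) t := by
      simpa [mem_eigenspace_iff, sub_eq_zero, hBR] using hv
    have hbot : eigenspace ((A : E →ₗ[𝕜] F) ∘ₗ R) t = ⊥ := not_not.mp ht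
    rwa [hbot, Submodule.mem_bot] at hv'
  have hsurj : Function.Surjective ((A - t • B) ∘ R) := LinearMap.injective_iff_surjective.mp hinj
  exact hsurj.of_comp

section CompleteSpace

variable [CompleteSpace 𝕜]

theorem isOpen_setOf_surjective [FiniteDimensional 𝕜 F] :
    IsOpen {A : E →L[𝕜] F | Function.Surjective A} := by
  have surjective_iff_le_rank (A : E →L[𝕜] F) :
      Function.Surjective A ↔ (finrank 𝕜 F : Cardinal) ≤ (A : E →ₗ[𝕜] F).rank := by
    rw [LinearMap.rank, ← finrank_eq_rank, Nat.cast_le]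
    refine ⟨fun hA => ?_, fun h => ?_⟩
    · rw [LinearMap.range_eq_top.mpr hA, finrank_top]
    · exact LinearMap.range_eq_top.mp (Submodule.eq_top_of_finrank_eq
        (le_antisymm (Submodule.finrank_le _) h))
  simpa only [surjective_iff_le_rank] using isOpen_setOfPred_nat_le_rank (finrank 𝕜 F)

theorem isOpen_setOf_finrank_ker_le [FiniteDimensional 𝕜 E] (n : ℕ) :
    IsOpen {A : E →L[𝕜] F | finrank 𝕜 (A : E →ₗ[𝕜] F).ker ≤ n} := by
  have finrank_ker_le_iff (A : E →L[𝕜] F) :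
      finrank 𝕜 (A : E →ₗ[𝕜] F).ker ≤ n ↔
        ((finrank 𝕜 E - n : ℕ) : Cardinal) ≤ (A : E →ₗ[𝕜] F).rank := by
    rw [LinearMap.rank, ← finrank_eq_rank, Nat.cast_le]
    have := (A : E →ₗ[𝕜] F).finrank_range_add_finrank_ker
    lia
  simpa only [finrank_ker_le_iff] using isOpen_setOfPred_nat_le_rank (finrank 𝕜 E - n)

theorem isOpen_setOf_finrank_eigenspace_le [FiniteDimensional 𝕜 E] (n : ℕ) :
    IsOpen {p : (E →L[𝕜] E) × 𝕜 | finrank 𝕜 (eigenspace (p.1 : E →ₗ[𝕜] E) p.2) ≤ n} := by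
  have hcont : Continuous fun p : (E →L[𝕜] E) × 𝕜 => p.1 - p.2 • ContinuousLinearMap.id 𝕜 E := by
    fun_prop
  have finrank_eq (p : (E →L[𝕜] E) × 𝕜) : finrank 𝕜 (eigenspace (p.1 : E →ₗ[𝕜] E) p.2) =
      finrank 𝕜 (p.1 - p.2 • ContinuousLinearMap.id 𝕜 E).ker := by
    rw [eigenspace_def]
    rfl
  simp only [finrank_eq]
  exact (isOpen_setOf_finrank_ker_le n).preimage hcont

end CompleteSpace

theorem isOpen_setOf_forall_finrank_eigenspace_le [ProperSpace 𝕜] [FiniteDimensional 𝕜 E] (n : ℕ) :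
    IsOpen {T : E →L[𝕜] E | ∀ μ : 𝕜, finrank 𝕜 (eigenspace (T : E →ₗ[𝕜] E) μ) ≤ n} := by
  refine isOpen_iff_eventually.mpr fun T₀ hT₀ => ?_
  have small_norm : ∀ᶠ T in 𝓝 T₀, ‖T‖ < ‖T₀‖ + 1 :=
    continuous_norm.continuousAt.eventually_lt_const (lt_add_one _)
  have small_eigenvalues : ∀ᶠ T : E →L[𝕜] E in 𝓝 T₀, ∀ μ ∈ Metric.closedBall (0 : 𝕜) (‖T₀‖ + 1),
      finrank 𝕜 (eigenspace (T : E →ₗ[𝕜] E) μ) ≤ n :=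
    (isCompact_closedBall _ _).eventually_forall_of_forall_eventually fun μ _ =>
      (isOpen_setOf_finrank_eigenspace_le n).mem_nhds (hT₀ μ)
  filter_upwards [small_norm, small_eigenvalues] with T hT hball μ
  by_cases hμ : ‖μ‖ ≤ ‖T₀‖ + 1
  · exact hball μ (mem_closedBall_zero_iff.mpr hμ)
  · rw [eigenspace_eq_bot_of_opNorm_lt (hT.trans (not_le.mp hμ)), finrank_bot]
    exact n.zero_le

end FiniteDimensional

theorem finrank_eigenspace_le_one_of_injective {ι K M : Type*} [Field K] [AddCommGroup M]
    [Module K M] (b : Basis ι K M) {f : Module.End K M} {ν : ι → K} (hν : Function.Injective ν)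
    (hf : ∀ i, f (b i) = ν i • b i) (μ : K) : finrank K (eigenspace f μ) ≤ 1 := by
  have repr_apply (v : M) (i : ι) : b.repr (f v) i = ν i * b.repr v i := by
    have h : b.coord i ∘ₗ f = ν i • b.coord i := b.ext fun j => by
      by_cases hij : j = i <;> simp [hf, hij]
    exact LinearMap.congr_fun h v
  have eq_of_repr_ne_zero {v : M} (hv : v ∈ eigenspace f μ) {i : ι} (hi : b.repr v i ≠ 0) :
      ν i = μ := by
    have h := repr_apply v i
    rw [mem_eigenspace_iff.mp hv, map_smul, Finsupp.smul_apply, smul_eq_mul] at h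
    exact (mul_right_cancel₀ hi h).symm
  by_cases hμ : ∃ i, ν i = μ
  · obtain ⟨i, rfl⟩ := hμ
    have hle : eigenspace f (ν i) ≤ Submodule.span K {b i} := fun v hv => by
      rw [← Set.image_singleton, b.mem_span_image]
      intro j hj
      exact hν (eq_of_repr_ne_zero hv (Finsupp.mem_support_iff.mp hj))
    exact (Submodule.finrank_mono hle).trans ((finrank_span_le_card _).trans (by simp))
  · have hbot : eigenspace f μ = ⊥ := (Submodule.eq_bot_iff _).mpr fun v hv =>
      b.ext_elem fun i => by
        by_contra hi
        exact hμ ⟨i, eq_of_repr_ne_zero hv (by simpa using hi)⟩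
    rw [hbot, finrank_bot]
    exact zero_le_one

theorem strictAnti_sq_mul {ι : Type*} [Preorder ι] {a l : ι → ℝ} (ha : StrictAnti a)
    (ha_pos : ∀ i, 0 < a i) (hl : Antitone l) (hl_pos : ∀ i, 0 < l i) :
    StrictAnti fun i => a i ^ 2 * l i := fun _ j hij =>
  mul_lt_mul (pow_lt_pow_left₀ (ha hij) (ha_pos j).le two_ne_zero) (hl hij.le) (hl_pos j)
    (sq_nonneg _)

section InnerProductSpace

variable {𝕜 V : Type*} [RCLike 𝕜] [NormedAddCommGroup V] [InnerProductSpace 𝕜 V]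

theorem exists_isSymmetric_apply_eq_smul {ι : Type*} [Fintype ι] (e : OrthonormalBasis ι 𝕜 V)
    (c : ι → ℝ) :
    ∃ D : V →L[𝕜] V, (D : V →ₗ[𝕜] V).IsSymmetric ∧ ∀ i, D (e i) = (c i : 𝕜) • e i := by
  classical
  refine ⟨∑ i, (c i : 𝕜) • InnerProductSpace.rankOne 𝕜 (e i) (e i), ?_, fun i => ?_⟩
  · intro v w
    simp [sum_inner, inner_sum, inner_smul_left, inner_smul_right, mul_comm]
  · simp [orthonormal_iff_ite.mp e.orthonormal]

section FrameOperator

variable {E : Type*} [NormedAddCommGroup E] [InnerProductSpace 𝕜 E] [CompleteSpace E]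
  [CompleteSpace V]

/-- The frame operator `A A†` of `A : E → V`. When `E` is a Euclidean space, the frame consists of
the images under `A` of the standard basis vectors, and `A` is its synthesis operator. -/
noncomputable def frameOperator (A : E →L[𝕜] V) : V →L[𝕜] V := A ∘L adjoint A

theorem frameOperator_comp (S : V →L[𝕜] V) (A : E →L[𝕜] V) :
    frameOperator (S ∘L A) = S ∘L frameOperator A ∘L adjoint S := by
  simp only [frameOperator, ContinuousLinearMap.adjoint_comp, ContinuousLinearMap.comp_assoc]

theorem continuous_frameOperator : Continuous (frameOperator : (E →L[𝕜] V) → (V →L[𝕜] V)) := by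
  unfold frameOperator
  fun_prop

end FrameOperator

variable [FiniteDimensional 𝕜 V]

theorem eigenvalues_pos_of_injective {T : V →ₗ[𝕜] V} (hT : T.IsPositive)
    (hinj : Function.Injective T) {n : ℕ} (hn : finrank 𝕜 V = n) (i : Fin n) :
    0 < hT.isSymmetric.eigenvalues hn i := by
  refine (hT.nonneg_eigenvalues hn i).lt_of_ne' fun h => ?_
  have hTe := hT.isSymmetric.apply_eigenvectorBasis hn i
  rw [h, RCLike.ofReal_zero, zero_smul] at hTe
  exact (hT.isSymmetric.eigenvectorBasis hn).toBasis.ne_zero i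
    (by simpa using hinj (hTe.trans (map_zero T).symm))

theorem exists_isSymmetric_forall_finrank_eigenspace_le_one {T : V →L[𝕜] V} (hT : T.IsPositive)
    (hinj : Function.Injective T) :
    ∃ D : V →L[𝕜] V, (D : V →ₗ[𝕜] V).IsSymmetric ∧ ∀ t : ℝ, 0 < t → ∀ μ : 𝕜,
      finrank 𝕜 (eigenspace (((1 + (t : 𝕜) • D) ∘L T ∘L (1 + (t : 𝕜) • D) : V →L[𝕜] V) :
        V →ₗ[𝕜] V) μ) ≤ 1 := by
  have hTpos : (T : V →ₗ[𝕜] V).IsPositive := hT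
  let e := hTpos.isSymmetric.eigenvectorBasis rfl
  let l := hTpos.isSymmetric.eigenvalues rfl
  have hTe (i) : T (e i) = (l i : 𝕜) • e i := hTpos.isSymmetric.apply_eigenvectorBasis rfl i
  let c : Fin (finrank 𝕜 V) → ℝ := fun i => (i.rev : ℕ)
  obtain ⟨D, hD, hDe⟩ := exists_isSymmetric_apply_eq_smul e c
  refine ⟨D, hD, fun t ht => ?_⟩
  let a : Fin (finrank 𝕜 V) → ℝ := fun i => 1 + t * c i
  have ha : StrictAnti a := fun i j hij => by
    have hc : c j < c i := Nat.cast_lt.mpr (Fin.rev_lt_rev.mpr hij)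
    simpa [a] using mul_lt_mul_of_pos_left hc ht
  have ha_pos (i) : 0 < a i := by positivity
  have hanti : StrictAnti fun i => a i ^ 2 * l i :=
    strictAnti_sq_mul ha ha_pos (hTpos.isSymmetric.eigenvalues_antitone rfl)
      (eigenvalues_pos_of_injective hTpos hinj rfl)
  have hSe (i) : (1 + (t : 𝕜) • D) (e i) = (a i : 𝕜) • e i := by
    simp [a, hDe, add_smul, mul_smul]
  refine finrank_eigenspace_le_one_of_injective e.toBasis
    (RCLike.ofReal_injective.comp hanti.injective) fun i => ?_
  simp only [OrthonormalBasis.coe_toBasis, ContinuousLinearMap.coe_coe,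
    ContinuousLinearMap.comp_apply, hSe, map_smul, hTe, smul_smul, Function.comp_apply]
  push_cast
  ring_nf

variable {E : Type*} [NormedAddCommGroup E] [InnerProductSpace 𝕜 E] [CompleteSpace E]
  [CompleteSpace V]

theorem surjective_iff_injective_adjoint (A : E →L[𝕜] V) :
    Function.Surjective A ↔ Function.Injective (adjoint A) :=
  calc
    Function.Surjective A ↔ A.range = ⊤ := LinearMap.range_eq_top.symm
    _ ↔ A.rangeᗮ = ⊥ := Submodule.orthogonal_eq_bot_iff.symm
    _ ↔ (adjoint A).ker = ⊥ := by rw [A.orthogonal_range]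
    _ ↔ Function.Injective (adjoint A) := LinearMap.ker_eq_bot

theorem exists_surjective_of_finrank_le_rank (h : (finrank 𝕜 V : Cardinal) ≤ Module.rank 𝕜 E) :
    ∃ B : E →L[𝕜] V, Function.Surjective B := by
  obtain ⟨f, hf⟩ := le_rank_iff_exists_linearMap.mp h
  let J : V →L[𝕜] E := LinearMap.toContinuousLinearMap
    (f ∘ₗ (finBasis 𝕜 V).equivFun.toLinearMap)
  have hJ : Function.Injective J := hf.comp (finBasis 𝕜 V).equivFun.injective
  refine ⟨adjoint J, (surjective_iff_injective_adjoint _).mpr ?_⟩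
  rwa [ContinuousLinearMap.adjoint_adjoint]

/-- Generic frames, in terms of the synthesis operator: `A` is onto and the eigenvalues of its frame
operator are pairwise distinct. As the frame operator is diagonalizable, distinctness is expressed
by bounding the dimensions of its eigenspaces. -/
def IsGenericFrame (A : E →L[𝕜] V) : Prop :=
  Function.Surjective A ∧ ∀ μ : 𝕜, finrank 𝕜 (eigenspace (frameOperator A : V →ₗ[𝕜] V) μ) ≤ 1

theorem isOpen_setOf_isGenericFrame : IsOpen {A : E →L[𝕜] V | IsGenericFrame A} := by
  have isOpen_surjective : IsOpen {A : E →L[𝕜] V | Function.Surjective A} := isOpen_setOf_surjective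
  have isOpen_simple := isOpen_setOf_forall_finrank_eigenspace_le (𝕜 := 𝕜) (E := V) 1
  exact isOpen_surjective.inter (isOpen_simple.preimage continuous_frameOperator)

theorem mem_closure_isGenericFrame_of_surjective {A : E →L[𝕜] V} (hA : Function.Surjective A) :
    A ∈ closure {A : E →L[𝕜] V | IsGenericFrame A} := by
  have hinj : Function.Injective (frameOperator A) :=
    A.self_comp_adjoint_injective_iff.mpr ((surjective_iff_injective_adjoint A).mp hA)
  obtain ⟨D, hD, hsimple⟩ := exists_isSymmetric_forall_finrank_eigenspace_le_one
    A.isPositive_self_comp_adjoint hinj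
  have tendsto_perturbation :
      Tendsto (fun t : ℝ => (1 + (t : 𝕜) • D) ∘L A) (𝓝[>] 0) (𝓝 A) := by
    have hcont : Continuous fun t : ℝ => (1 + (t : 𝕜) • D) ∘L A := by fun_prop
    have h := hcont.tendsto 0
    simp only [RCLike.ofReal_zero, zero_smul, add_zero] at h
    exact h.mono_left nhdsWithin_le_nhds
  refine mem_closure_of_tendsto tendsto_perturbation ?_
  filter_upwards [tendsto_perturbation (isOpen_setOf_surjective.mem_nhds hA), self_mem_nhdsWithin]
    with t hsurj ht
  have hS : adjoint (1 + (t : 𝕜) • D) = 1 + (t : 𝕜) • D := by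
    refine LinearMap.IsSymmetric.clm_adjoint_eq ?_
    simpa using LinearMap.IsSymmetric.one.add (hD.smul (by simp))
  refine ⟨hsurj, fun μ => ?_⟩
  rw [frameOperator_comp, hS]
  exact hsimple t ht μ

theorem generic_frames_open_dense_general (h : (finrank 𝕜 V : Cardinal) ≤ Module.rank 𝕜 E) :
    IsOpen {A : E →L[𝕜] V | IsGenericFrame A} ∧ Dense {A : E →L[𝕜] V | IsGenericFrame A} := by
  refine ⟨isOpen_setOf_isGenericFrame, ?_⟩
  obtain ⟨B, hB⟩ := exists_surjective_of_finrank_le_rank h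
  exact dense_closure.mp
    ((dense_setOf_surjective hB).mono fun _ => mem_closure_isGenericFrame_of_surjective)

end InnerProductSpace

/-- For `n ≥ k ≥ 1`, the set of generic frames—surjective continuous linear maps
`A : EuclideanSpace ℝ (Fin n) → V` whose frame operator `A ∘ A†` has pairwise distinct
eigenvalues, i.e., every eigenspace of `A ∘ A†` has dimension at most 1—is open and dense
in the space of all continuous linear maps with the operator-norm topology. -/
theorem generic_frames_open_dense {n k : ℕ} (hnk : k ≤ n) (hk : 1 ≤ k) {V : Type*}
    [NormedAddCommGroup V] [InnerProductSpace ℝ V] [FiniteDimensional ℝ V]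
    (hV : Module.finrank ℝ V = k) :
    IsOpen {A : EuclideanSpace ℝ (Fin n) →L[ℝ] V | Function.Surjective A ∧
        ∀ μ : ℝ, Module.finrank ℝ
          (Module.End.eigenspace
            ((A ∘L ContinuousLinearMap.adjoint A : V →L[ℝ] V) : V →ₗ[ℝ] V) μ) ≤ 1} ∧
      Dense {A : EuclideanSpace ℝ (Fin n) →L[ℝ] V | Function.Surjective A ∧
        ∀ μ : ℝ, Module.finrank ℝ
          (Module.End.eigenspace
            ((A ∘L ContinuousLinearMap.adjoint A : V →L[ℝ] V) : V →ₗ[ℝ] V) μ) ≤ 1} := by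
  refine generic_frames_open_dense_general ?_
  rw [← finrank_eq_rank ℝ (EuclideanSpace ℝ (Fin n)), hV, finrank_euclideanSpace_fin]
  exact Nat.cast_le.mpr hnk
end
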